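/- Enlarging a hierarchical constellation does not decrease the low-priority BICM-SIC rate: for every ρ ≥ 1 and noise variance σ_L² > 0, r_L(ρμ, σ_L²) ≥ r_L(μ, σ_L²), where ρμ is the constellation obtained by multiplying every point of μ by ρ; that is, Σ_{j=1}^{m_L} I(B_L^j ; ρZ + N_L | B_H) ≥ Σ_{j=1}^{m_L} I(B_L^j ; Z + N_L | B_H). -/

import Mathlib

open MeasureTheory ProbabilityTheory
open scoped ENNReal NNReal

/-- The centered complex Gaussian law of variance `v`: real and imaginary parts are independent
centered real Gaussians of variance `v/2`. -/
noncomputable def complexGaussian (v : ℝ≥0) : Measure ℂ :=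
  ((gaussianReal 0 (v / 2)).prod (gaussianReal 0 (v / 2))).map
    (fun p => (p.1 : ℂ) + (p.2 : ℂ) * Complex.I)

/-- Kullback-Leibler divergence in base 2 (in bits). -/
noncomputable def klDiv2 {α : Type*} [MeasurableSpace α] (μ ν : Measure α) : ℝ :=
  ∫ x, Real.logb 2 ((μ.rnDeriv ν x).toReal) ∂μ

/-- Mutual information (base 2) of two random variables: KL divergence of the joint law from
the product of the marginal laws. -/
noncomputable def mutualInfo {Ω α β : Type*} [MeasurableSpace Ω] [MeasurableSpace α]
    [MeasurableSpace β] (P : Measure Ω) (X : Ω → α) (Y : Ω → β) : ℝ :=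
  klDiv2 (P.map fun ω => (X ω, Y ω)) ((P.map X).prod (P.map Y))

/-- Conditional mutual information given a finite-valued random variable `B`:
`I(X;Y|B) = ∑ b, P(B = b) · I(X;Y)` computed under the conditional measure `P[|B = b]`. -/
noncomputable def condMutualInfo {Ω α β γ : Type*} [MeasurableSpace Ω] [MeasurableSpace α]
    [MeasurableSpace β] [MeasurableSpace γ] [Fintype γ] (P : Measure Ω) (X : Ω → α) (Y : Ω → β)
    (B : Ω → γ) : ℝ :=
  ∑ b : γ, (P (B ⁻¹' {b})).toReal * mutualInfo (P[|B ⁻¹' {b}]) X Y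

/-!
The receiver of `ρZ + N` can multiply its observation by `ρ⁻¹` and add an independent complex
Gaussian noise of variance `(1 - ‖ρ‖⁻²) σ²`; the total noise then has variance `σ²` again, so the
original channel is a degraded version of the amplified one. Since the noise is independent of both
labels, this remains true conditionally on each value of `B_H`, where the data processing inequality
compares the mutual informations of every bit `B_L^j`. A finite-valued variable has a joint law
with any other variable that is bounded by a multiple of the product of the marginals, so all
divergences are finite and the extended-real inequality passes to the real-valued one.
-/

open InformationTheory

section KullbackLeibler

variable {α : Type*} [MeasurableSpace α] {μ ν : Measure α}

lemma ae_rnDeriv_le_of_le_smul [SigmaFinite ν] {C : ℝ≥0} (h : μ ≤ C • ν) :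
    ∀ᵐ x ∂ν, μ.rnDeriv ν x ≤ C := by
  refine ae_le_of_forall_setLIntegral_le_of_sigmaFinite (Measure.measurable_rnDeriv μ ν)
    fun s _ _ => ?_
  calc ∫⁻ x in s, μ.rnDeriv ν x ∂ν
    _ ≤ μ s := Measure.setLIntegral_rnDeriv_le s
    _ ≤ C * ν s := h s
    _ = ∫⁻ _ in s, C ∂ν := (setLIntegral_const s _).symm

lemma klDiv_ne_top_of_le_smul [IsFiniteMeasure μ] [IsFiniteMeasure ν] {C : ℝ≥0}
    (h : μ ≤ C • ν) : klDiv μ ν ≠ ∞ := by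
  have hac : μ ≪ ν := Measure.absolutelyContinuous_of_le_smul (c := C) h
  refine klDiv_ne_top hac ((integrable_klFun_rnDeriv_iff hac).mp ?_)
  obtain ⟨M, hM⟩ := (isCompact_Icc (a := (0 : ℝ)) (b := C)).exists_bound_of_continuousOn
    continuous_klFun.continuousOn
  refine Integrable.of_bound (C := M)
    (measurable_klFun.comp (Measure.measurable_rnDeriv μ ν).ennreal_toReal).aestronglyMeasurable ?_
  filter_upwards [ae_rnDeriv_le_of_le_smul h] with x hx
  exact hM _ ⟨ENNReal.toReal_nonneg, ENNReal.toReal_le_coe_of_le_coe hx⟩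

lemma klDiv2_eq_toReal_klDiv_div_log [IsFiniteMeasure μ] [IsFiniteMeasure ν] (hac : μ ≪ ν)
    (huniv : μ Set.univ = ν Set.univ) : klDiv2 μ ν = (klDiv μ ν).toReal / Real.log 2 := by
  rw [toReal_klDiv_of_measure_eq hac huniv, ← integral_div]
  rfl

end KullbackLeibler

section ParallelKernels

variable {α α' β β' : Type*} [MeasurableSpace α] [MeasurableSpace α'] [MeasurableSpace β]
  [MeasurableSpace β']

lemma fst_parallelComp_comp (J : Measure (α × β)) (κ : Kernel α α') [IsSFiniteKernel κ]
    (η : Kernel β β') [IsMarkovKernel η] : ((κ ∥ₖ η) ∘ₘ J).fst = κ ∘ₘ J.fst := by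
  ext s hs
  rw [Measure.fst_apply hs, Measure.bind_apply (measurable_fst hs) (Kernel.aemeasurable _),
    Measure.bind_apply hs (Kernel.aemeasurable _), Measure.fst,
    lintegral_map (Kernel.measurable_coe κ hs) measurable_fst]
  refine lintegral_congr fun x => ?_
  rw [Kernel.parallelComp_apply, ← Measure.fst_apply hs, Measure.fst_prod]

lemma snd_parallelComp_comp (J : Measure (α × β)) (κ : Kernel α α') [IsMarkovKernel κ]
    (η : Kernel β β') [IsSFiniteKernel η] : ((κ ∥ₖ η) ∘ₘ J).snd = η ∘ₘ J.snd := by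
  ext s hs
  rw [Measure.snd_apply hs, Measure.bind_apply (measurable_snd hs) (Kernel.aemeasurable _),
    Measure.bind_apply hs (Kernel.aemeasurable _), Measure.snd,
    lintegral_map (Kernel.measurable_coe η hs) measurable_snd]
  refine lintegral_congr fun x => ?_
  rw [Kernel.parallelComp_apply, ← Measure.snd_apply hs, Measure.snd_prod]

end ParallelKernels

section MutualInformation

variable {Ω α β γ : Type*} [MeasurableSpace Ω] [MeasurableSpace α] [MeasurableSpace β]
  [MeasurableSpace γ] {P : Measure Ω} {X : Ω → α} {Y : Ω → β}

lemma mutualInfo_eq_klDiv2_fst_prod_snd (hX : Measurable X) (hY : Measurable Y) :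
    mutualInfo P X Y = klDiv2 (P.map fun ω => (X ω, Y ω))
      ((P.map fun ω => (X ω, Y ω)).fst.prod (P.map fun ω => (X ω, Y ω)).snd) := by
  rw [Measure.fst_map_prodMk hY, Measure.snd_map_prodMk hX, mutualInfo]

section FiniteAlphabet

lemma exists_one_le_mul_measure_singleton [Finite α] (p : Measure α) [IsFiniteMeasure p] :
    ∃ C : ℝ≥0, ∀ a, p {a} ≠ 0 → 1 ≤ C * p {a} := by
  cases nonempty_fintype α
  refine ⟨∑ a, (p {a}).toNNReal⁻¹, fun a ha => ?_⟩
  have hne : (p {a}).toNNReal ≠ 0 := ENNReal.toNNReal_ne_zero.mpr ⟨ha, measure_ne_top p _⟩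
  have hle : (p {a}).toNNReal⁻¹ ≤ ∑ a, (p {a}).toNNReal⁻¹ :=
    Finset.single_le_sum (f := fun a => (p {a}).toNNReal⁻¹) (fun _ _ => zero_le)
      (Finset.mem_univ a)
  rw [← ENNReal.coe_toNNReal (measure_ne_top p {a})]
  exact_mod_cast (inv_mul_cancel₀ hne).symm.le.trans (mul_le_mul_left hle _)

lemma measure_eq_sum_singleton_prod [Fintype α] [MeasurableSingletonClass α]
    (J : Measure (α × β)) (S : Set (α × β)) : J S = ∑ a, J ({a} ×ˢ (Prod.mk a ⁻¹' S)) := by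
  have hslice (a : α) : {a} ×ˢ (Prod.mk a ⁻¹' S) = Prod.fst ⁻¹' {a} ∩ S := by
    ext ⟨a', b⟩
    constructor <;> rintro ⟨rfl, hb⟩ <;> exact ⟨rfl, hb⟩
  have hmeas (a : α) : MeasurableSet ((Prod.fst : α × β → α) ⁻¹' {a}) :=
    measurable_fst (measurableSet_singleton a)
  calc J S
    _ = ∑ a, J.restrict S (Prod.fst ⁻¹' {a}) := by
      rw [sum_measure_preimage_singleton _ fun a _ => hmeas a, Finset.coe_univ, Set.preimage_univ,
        Measure.restrict_apply_univ]
    _ = ∑ a, J ({a} ×ˢ (Prod.mk a ⁻¹' S)) :=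
      Finset.sum_congr rfl fun a _ => by rw [Measure.restrict_apply (hmeas a), hslice]

variable [Finite α] [MeasurableSingletonClass α]

lemma exists_le_smul_fst_prod_snd (J : Measure (α × β)) [IsFiniteMeasure J] :
    ∃ C : ℝ≥0, J ≤ C • J.fst.prod J.snd := by
  cases nonempty_fintype α
  obtain ⟨C, hC⟩ := exists_one_le_mul_measure_singleton J.fst
  have hrect (a : α) {T : Set β} (hT : MeasurableSet T) :
      J ({a} ×ˢ T) ≤ C * (J.snd T * J.fst {a}) := by
    by_cases ha : J.fst {a} = 0
    · have hzero : J ({a} ×ˢ T) ≤ J.fst {a} := by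
        rw [Measure.fst_apply (measurableSet_singleton a)]
        exact measure_mono fun x hx => hx.1
      exact (hzero.trans_eq ha).trans zero_le
    · calc J ({a} ×ˢ T)
        _ ≤ J.snd T := by
          rw [Measure.snd_apply hT]
          exact measure_mono fun x hx => hx.2
        _ ≤ (C * J.fst {a}) * J.snd T := le_mul_of_one_le_left zero_le (hC a ha)
        _ = C * (J.snd T * J.fst {a}) := by ring
  refine ⟨C, Measure.le_iff.mpr fun S hS => ?_⟩
  calc J S
    _ = ∑ a, J ({a} ×ˢ (Prod.mk a ⁻¹' S)) := measure_eq_sum_singleton_prod J S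
    _ ≤ ∑ a, C * (J.snd (Prod.mk a ⁻¹' S) * J.fst {a}) :=
      Finset.sum_le_sum fun a _ => hrect a (measurable_prodMk_left hS)
    _ = (C • J.fst.prod J.snd) S := by
      rw [Measure.smul_apply, Measure.prod_apply hS, lintegral_fintype, ENNReal.smul_def,
        smul_eq_mul, Finset.mul_sum]

lemma klDiv_fst_prod_snd_ne_top (J : Measure (α × β)) [IsFiniteMeasure J] :
    klDiv J (J.fst.prod J.snd) ≠ ∞ :=
  (exists_le_smul_fst_prod_snd J).elim fun _ hC => klDiv_ne_top_of_le_smul hC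

lemma klDiv2_fst_prod_snd (J : Measure (α × β)) [IsProbabilityMeasure J] :
    klDiv2 J (J.fst.prod J.snd) = (klDiv J (J.fst.prod J.snd)).toReal / Real.log 2 := by
  obtain ⟨C, hC⟩ := exists_le_smul_fst_prod_snd J
  exact klDiv2_eq_toReal_klDiv_div_log (Measure.absolutelyContinuous_of_le_smul (c := C) hC)
    (by simp only [measure_univ])

theorem mutualInfo_le_of_map_eq_parallelComp [IsProbabilityMeasure P] {Y' : Ω → γ}
    (hX : Measurable X) (hY : Measurable Y) (hY' : Measurable Y') (κ : Kernel β γ)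
    [IsMarkovKernel κ]
    (hκ : P.map (fun ω => (X ω, Y' ω)) = (Kernel.id ∥ₖ κ) ∘ₘ P.map fun ω => (X ω, Y ω)) :
    mutualInfo P X Y' ≤ mutualInfo P X Y := by
  rw [mutualInfo_eq_klDiv2_fst_prod_snd hX hY, mutualInfo_eq_klDiv2_fst_prod_snd hX hY', hκ]
  have : IsProbabilityMeasure (P.map fun ω => (X ω, Y ω)) :=
    Measure.isProbabilityMeasure_map (hX.prodMk hY).aemeasurable
  generalize P.map (fun ω => (X ω, Y ω)) = J at *
  rw [klDiv2_fst_prod_snd, klDiv2_fst_prod_snd]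
  gcongr
  · exact klDiv_fst_prod_snd_ne_top J
  · rw [fst_parallelComp_comp, snd_parallelComp_comp, Measure.id_comp, Measure.prod_comp_right]
    exact klDiv_comp_right_le _ _ _

end FiniteAlphabet

lemma condMutualInfo_le_condMutualInfo [Fintype γ] {B : Ω → γ} {Y Y' : Ω → β}
    (h : ∀ b, P (B ⁻¹' {b}) ≠ 0 →
      mutualInfo (P[|B ⁻¹' {b}]) X Y ≤ mutualInfo (P[|B ⁻¹' {b}]) X Y') :
    condMutualInfo P X Y B ≤ condMutualInfo P X Y' B := by
  refine Finset.sum_le_sum fun b _ => ?_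
  by_cases hb : P (B ⁻¹' {b}) = 0
  · simp only [hb, ENNReal.toReal_zero, zero_mul, le_refl]
  · exact mul_le_mul_of_nonneg_left (h b hb) ENNReal.toReal_nonneg

end MutualInformation

section Conditioning

variable {Ω β γ δ : Type*} [MeasurableSpace Ω] [MeasurableSpace β] [MeasurableSpace γ]
  [MeasurableSpace δ] {P : Measure Ω} {B : Ω → β} {U : Ω → γ} {V : Ω → δ}

lemma map_cond_preimage_eq_of_indepFun [IsFiniteMeasure P] (hB : Measurable B) (hV : Measurable V)
    (h : IndepFun B V P) {t : Set β} (ht : MeasurableSet t) (hP : P (B ⁻¹' t) ≠ 0) :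
    (P[|B ⁻¹' t]).map V = P.map V := by
  ext s hs
  rw [Measure.map_apply hV hs, Measure.map_apply hV hs, cond_apply (hB ht),
    h.measure_inter_preimage_eq_mul t s ht hs, ← mul_assoc,
    ENNReal.inv_mul_cancel hP (measure_ne_top P _), one_mul]

lemma indepFun_cond_preimage [IsFiniteMeasure P] (hB : Measurable B) (hV : Measurable V)
    (h : IndepFun (fun ω => (B ω, U ω)) V P) {t : Set β} (ht : MeasurableSet t)
    (hP : P (B ⁻¹' t) ≠ 0) : IndepFun U V (P[|B ⁻¹' t]) := by
  have hBV : IndepFun B V P := h.comp measurable_fst measurable_id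
  refine indepFun_iff_measure_inter_preimage_eq_mul.mpr fun s r hs hr => ?_
  rw [← Measure.map_apply hV hr, map_cond_preimage_eq_of_indepFun hB hV hBV ht hP,
    Measure.map_apply hV hr, cond_apply (hB ht), cond_apply (hB ht), mul_assoc, ← Set.inter_assoc]
  exact congrArg _ (h.measure_inter_preimage_eq_mul (t ×ˢ s) r (ht.prod hs) hr)

end Conditioning

section NoisyChannel

variable {R α Ω : Type*} [Semiring R] [MeasurableSpace R] [MeasurableAdd₂ R] [MeasurableMul R]
  [MeasurableSpace α] [MeasurableSpace Ω]

/-- The additive noise channel with gain `a` and noise law `ν`: on input `z`, it outputs `a * z + N`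
with `N` distributed according to `ν`. -/
noncomputable def noisyChannel (a : R) (ν : Measure R) : Kernel R R :=
  (Kernel.id ×ₖ Kernel.const R ν).map fun p => a * p.1 + p.2

instance isMarkovKernel_noisyChannel (a : R) (ν : Measure R) [IsProbabilityMeasure ν] :
    IsMarkovKernel (noisyChannel a ν) :=
  Kernel.IsMarkovKernel.map _ (by fun_prop)

lemma noisyChannel_comp_measure (a : R) (μ ν : Measure R) [SFinite μ] [SFinite ν] :
    noisyChannel a ν ∘ₘ μ = (μ.prod ν).map fun p => a * p.1 + p.2 := by
  rw [noisyChannel, ← Measure.map_comp _ _ (by fun_prop), ← Measure.compProd_eq_comp_prod,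
    Measure.compProd_const]

lemma noisyChannel_apply (a : R) (ν : Measure R) [SFinite ν] (z : R) :
    noisyChannel a ν z = ν.map (a * z + ·) := by
  rw [noisyChannel, Kernel.map_apply _ (by fun_prop), Kernel.prod_apply, Kernel.id_apply,
    Kernel.const_apply, Measure.dirac_prod, Measure.map_map (by fun_prop) (by fun_prop)]
  rfl

lemma noisyChannel_comp_noisyChannel (a b : R) (ν η : Measure R) [SFinite ν] [SFinite η] :
    noisyChannel b η ∘ₖ noisyChannel a ν = noisyChannel (b * a) ((ν.map (b * ·)) ∗ η) := by
  ext1 z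
  have hν : (ν.map (b * ·)).prod η = (ν.prod η).map (Prod.map (b * ·) id) := by
    rw [← Measure.map_prod_map _ _ (by fun_prop) measurable_id, Measure.map_id]
  have hνz : (ν.map (a * z + ·)).prod η = (ν.prod η).map (Prod.map (a * z + ·) id) := by
    rw [← Measure.map_prod_map _ _ (by fun_prop) measurable_id, Measure.map_id]
  rw [Kernel.comp_apply, noisyChannel_apply, noisyChannel_apply, noisyChannel_comp_measure,
    Measure.conv, hν, hνz, Measure.map_map (by fun_prop) (by fun_prop),
    Measure.map_map (by fun_prop) (by fun_prop), Measure.map_map (by fun_prop) (by fun_prop)]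
  congr 1
  ext p
  simp only [Function.comp_apply, Prod.map_fst, Prod.map_snd, id_eq, mul_add, mul_assoc, add_assoc]

lemma id_parallelComp_noisyChannel_comp_measure (a : R) (ν : Measure R) [SFinite ν]
    (L : Measure (α × R)) :
    (Kernel.id ∥ₖ noisyChannel a ν) ∘ₘ L =
      (L.prod ν).map fun p => (p.1.1, a * p.1.2 + p.2) := by
  have : IsSFiniteKernel (noisyChannel a ν) := by unfold noisyChannel; infer_instance
  ext s hs
  rw [Measure.bind_apply hs (Kernel.aemeasurable _), Measure.map_apply (by fun_prop) hs,
    Measure.prod_apply (hs.preimage (by fun_prop))]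
  refine lintegral_congr fun x => ?_
  rw [Kernel.parallelComp_apply, noisyChannel_apply, Kernel.id_apply, Measure.dirac_prod,
    Measure.map_map (by fun_prop) (by fun_prop), Measure.map_apply (by fun_prop) hs]
  rfl

lemma map_prodMk_mul_add_eq_noisyChannel_comp {P : Measure Ω} [IsFiniteMeasure P]
    {X : Ω → α} {Z N : Ω → R} (hX : Measurable X) (hZ : Measurable Z) (hN : Measurable N)
    (h : IndepFun (fun ω => (X ω, Z ω)) N P) (a : R) :
    P.map (fun ω => (X ω, a * Z ω + N ω)) =
      (Kernel.id ∥ₖ noisyChannel a (P.map N)) ∘ₘ P.map fun ω => (X ω, Z ω) := by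
  rw [id_parallelComp_noisyChannel_comp_measure,
    ← h.map_prod_eq_prod_map_map (hX.prodMk hZ).aemeasurable hN.aemeasurable,
    Measure.map_map (by fun_prop) (by fun_prop)]
  rfl

end NoisyChannel

section ComplexGaussian

instance isProbabilityMeasure_complexGaussian (v : ℝ≥0) :
    IsProbabilityMeasure (complexGaussian v) :=
  Measure.isProbabilityMeasure_map (by fun_prop)

lemma charFun_complexGaussian (v : ℝ≥0) (t : ℂ) :
    charFun (complexGaussian v) t = Complex.exp (-(v * ‖t‖ ^ 2 / 4 : ℝ)) := by
  have hprod : charFun (complexGaussian v) t =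
      charFun (gaussianReal 0 (v / 2)) t.re * charFun (gaussianReal 0 (v / 2)) t.im := by
    rw [charFun_apply, charFun_apply_real, charFun_apply_real, complexGaussian,
      integral_map (by fun_prop) (by fun_prop), ← integral_prod_mul]
    congr 1 with p
    have hinner : inner ℝ ((p.1 : ℂ) + p.2 * Complex.I) t = t.re * p.1 + t.im * p.2 := by
      simp [Complex.inner]
    rw [hinner, ← Complex.exp_add]
    congr 1
    push_cast
    ring
  rw [hprod, charFun_gaussianReal, charFun_gaussianReal, ← Complex.exp_add, Complex.sq_norm,
    Complex.normSq_apply]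
  congr 1
  push_cast
  ring

lemma charFun_map_mul_left_complex (μ : Measure ℂ) (c t : ℂ) :
    charFun (μ.map (c * ·)) t = charFun μ (starRingEnd ℂ c * t) := by
  rw [charFun_apply, charFun_apply, integral_map (by fun_prop) (by fun_prop)]
  congr 1 with x
  rw [Complex.inner, Complex.inner, map_mul, ← mul_assoc, mul_comm t]

lemma complexGaussian_map_mul_left (c : ℂ) (v : ℝ≥0) :
    (complexGaussian v).map (c * ·) = complexGaussian (‖c‖₊ ^ 2 * v) := by
  have : IsProbabilityMeasure ((complexGaussian v).map (c * ·)) :=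
    Measure.isProbabilityMeasure_map (by fun_prop)
  refine Measure.ext_of_charFun (funext fun t => ?_)
  rw [charFun_map_mul_left_complex, charFun_complexGaussian, charFun_complexGaussian, norm_mul,
    RCLike.norm_conj]
  congr 3
  push_cast
  ring

lemma complexGaussian_conv_complexGaussian (v w : ℝ≥0) :
    complexGaussian v ∗ complexGaussian w = complexGaussian (v + w) := by
  refine Measure.ext_of_charFun (funext fun t => ?_)
  rw [charFun_conv, charFun_complexGaussian, charFun_complexGaussian, charFun_complexGaussian,
    ← Complex.exp_add]
  congr 1
  push_cast
  ring

lemma exists_noisyChannel_comp_eq_noisyChannel_one (v : ℝ≥0) {ρ : ℂ} (hρ : 1 ≤ ‖ρ‖) :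
    ∃ w : ℝ≥0, noisyChannel ρ⁻¹ (complexGaussian w) ∘ₖ noisyChannel ρ (complexGaussian v) =
      noisyChannel 1 (complexGaussian v) := by
  have hρ0 : ρ ≠ 0 := norm_pos_iff.mp (one_pos.trans_le hρ)
  have hle : ‖ρ⁻¹‖₊ ^ 2 * v ≤ v := by
    refine mul_le_of_le_one_left zero_le (pow_le_one₀ zero_le ?_)
    rw [nnnorm_inv]
    exact inv_le_one_of_one_le₀ hρ
  refine ⟨v - ‖ρ⁻¹‖₊ ^ 2 * v, ?_⟩
  rw [noisyChannel_comp_noisyChannel, inv_mul_cancel₀ hρ0, complexGaussian_map_mul_left,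
    complexGaussian_conv_complexGaussian, add_tsub_cancel_of_le hle]

end ComplexGaussian

section Amplification

variable {Ω α γ : Type*} [MeasurableSpace Ω] [MeasurableSpace α] [Finite α]
  [MeasurableSingletonClass α] [MeasurableSpace γ] {P : Measure Ω} [IsProbabilityMeasure P]
  {X : Ω → α} {Z N : Ω → ℂ} {v : ℝ≥0}

theorem mutualInfo_add_le_mutualInfo_mul_add (hX : Measurable X) (hZ : Measurable Z)
    (hN : Measurable N) (hlaw : P.map N = complexGaussian v)
    (hindep : IndepFun (fun ω => (X ω, Z ω)) N P) {ρ : ℂ} (hρ : 1 ≤ ‖ρ‖) :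
    mutualInfo P X (fun ω => Z ω + N ω) ≤ mutualInfo P X (fun ω => ρ * Z ω + N ω) := by
  obtain ⟨w, hw⟩ := exists_noisyChannel_comp_eq_noisyChannel_one v hρ
  refine mutualInfo_le_of_map_eq_parallelComp hX (by fun_prop) (by fun_prop)
    (noisyChannel ρ⁻¹ (complexGaussian w)) ?_
  have hone := map_prodMk_mul_add_eq_noisyChannel_comp hX hZ hN hindep 1
  simp only [one_mul] at hone
  rw [hone, map_prodMk_mul_add_eq_noisyChannel_comp hX hZ hN hindep ρ, hlaw, Measure.comp_assoc,
    Kernel.parallelComp_id_left_comp_parallelComp, hw]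

theorem condMutualInfo_add_le_condMutualInfo_mul_add [Fintype γ] [MeasurableSingletonClass γ]
    {B : Ω → γ} (hB : Measurable B) (hX : Measurable X) (hZ : Measurable Z) (hN : Measurable N)
    (hlaw : P.map N = complexGaussian v)
    (hindep : IndepFun (fun ω => (B ω, X ω, Z ω)) N P) {ρ : ℂ} (hρ : 1 ≤ ‖ρ‖) :
    condMutualInfo P X (fun ω => Z ω + N ω) B ≤
      condMutualInfo P X (fun ω => ρ * Z ω + N ω) B := by
  refine condMutualInfo_le_condMutualInfo fun b hb => ?_
  have : IsProbabilityMeasure (P[|B ⁻¹' {b}]) := cond_isProbabilityMeasure hb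
  have hBN : IndepFun B N P := hindep.comp measurable_fst measurable_id
  have hb' : MeasurableSet {b} := measurableSet_singleton b
  exact mutualInfo_add_le_mutualInfo_mul_add hX hZ hN
    ((map_cond_preimage_eq_of_indepFun hB hN hBN hb' hb).trans hlaw)
    (indepFun_cond_preimage hB hN hindep hb' hb) hρ

theorem hm_amplify_LP_rate_general {ι : Type*} [Fintype ι] {α : ι → Type*}
    [∀ j, MeasurableSpace (α j)] [∀ j, Finite (α j)] [∀ j, MeasurableSingletonClass (α j)]
    [Fintype γ] [MeasurableSingletonClass γ] (μc : γ × (∀ j, α j) → ℂ)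
    {BH : Ω → γ} {BL : Ω → ∀ j, α j} (hBH : Measurable BH) (hBL : Measurable BL)
    (hN : Measurable N) (hlaw : P.map N = complexGaussian v)
    (hindep : IndepFun (fun ω => (BH ω, BL ω)) N P) {ρ : ℂ} (hρ : 1 ≤ ‖ρ‖) :
    ∑ j, condMutualInfo P (fun ω => BL ω j) (fun ω => μc (BH ω, BL ω) + N ω) BH ≤
      ∑ j, condMutualInfo P (fun ω => BL ω j) (fun ω => ρ * μc (BH ω, BL ω) + N ω) BH := by
  have hμc : Measurable μc := measurable_of_finite μc
  refine Finset.sum_le_sum fun j _ => condMutualInfo_add_le_condMutualInfo_mul_add hBH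
    (by fun_prop) (by fun_prop) hN hlaw ?_ hρ
  exact hindep.comp (φ := fun u => (u.1, u.2 j, μc u)) (by fun_prop) measurable_id

end Amplification

/-!
STATEMENT 7: Enlarging a hierarchical constellation does not decrease the low-priority BICM-SIC
rate: for every `ρ ≥ 1` and noise variance `σ_L² > 0`,
`∑ j, I(B_L^j ; ρZ + N_L | B_H) ≥ ∑ j, I(B_L^j ; Z + N_L | B_H)`.
-/
theorem hm_amplify_LP_rate
    {Ω : Type*} [MeasurableSpace Ω] (P : Measure Ω) [IsProbabilityMeasure P]
    (mH mL : ℕ) (hmH : 0 < mH) (hmL : 0 < mL)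
    (μc : (Fin mH → Bool) × (Fin mL → Bool) → ℂ)
    (BH : Ω → Fin mH → Bool) (BL : Ω → Fin mL → Bool)
    (hBH : Measurable BH) (hBL : Measurable BL)
    (hUnif : P.map (fun ω => (BH ω, BL ω)) =
      (PMF.uniformOfFintype ((Fin mH → Bool) × (Fin mL → Bool))).toMeasure)
    (σL2 : ℝ≥0) (hσL2 : 0 < σL2)
    (NL : Ω → ℂ) (hNLMeas : Measurable NL)
    (lawNL : P.map NL = complexGaussian σL2)
    (hIndepNL : IndepFun (fun ω => (BH ω, BL ω)) NL P)
    (ρ : ℝ) (hρ : 1 ≤ ρ) :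
    ∑ j : Fin mL,
        condMutualInfo P (fun ω => BL ω j)
          (fun ω => (ρ : ℂ) * μc (BH ω, BL ω) + NL ω) BH ≥
      ∑ j : Fin mL,
        condMutualInfo P (fun ω => BL ω j)
          (fun ω => μc (BH ω, BL ω) + NL ω) BH :=
  hm_amplify_LP_rate_general μc hBH hBL hNLMeas lawNL hIndepNL (ρ := (ρ : ℂ))
    (hρ.trans (by simpa only [Complex.norm_real] using Real.le_norm_self ρ))
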